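/- In the quiver Q with vertices A, B, C, D and arrows a₁, a₂ : D → A, b₁ : A → B, b₂ : A → C, a₃ : C → B, c₁ : B → D, c₂ : C → D, every path of length at least 1 that contains none of the six two-step paths a₁b₁, b₁c₁, c₁a₁, a₂b₂, b₂c₂, c₂a₂ as a consecutive subpath is a consecutive subpath of the length-seven path c₂a₁b₂a₃c₁a₂b₁. In particular there is no such path of length ≥ 8, and the set of paths in Q avoiding these six two-step paths is finite. -/

import Mathlib

/-!
# Statement 2

Let `Q` be the quiver with vertices `A, B, C, D` and arrows `a₁, a₂ : D → A`, `b₁ : A → B`,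
`b₂ : A → C`, `a₃ : C → B`, `c₁ : B → D`, `c₂ : C → D`.  A path of length `r ≥ 1` is a
sequence of arrows `ℓ₁⋯ℓ_r` with the target of `ℓ_k` equal to the source of `ℓ_{k+1}`
(paths written left to right).  Every path of length at least `1` that contains none of the
six two-step paths `a₁b₁, b₁c₁, c₁a₁, a₂b₂, b₂c₂, c₂a₂` as a consecutive subpath is a
consecutive subpath (infix) of the length-seven path `c₂a₁b₂a₃c₁a₂b₁`.  In particular there
is no such path of length `≥ 8`, and the set of paths in `Q` avoiding these six two-step
paths is finite.
-/

/-- The vertices `A, B, C, D` of the quiver. -/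
inductive QVertex | A | B | C | D
deriving DecidableEq

/-- The arrows `a₁, a₂ : D → A`, `b₁ : A → B`, `b₂ : A → C`, `a₃ : C → B`, `c₁ : B → D`,
`c₂ : C → D` of the quiver. -/
inductive QArrow | a1 | a2 | b1 | b2 | a3 | c1 | c2
deriving DecidableEq

namespace QArrow

/-- Source vertex of an arrow. -/
def src : QArrow → QVertex
  | a1 => .D | a2 => .D | b1 => .A | b2 => .A | a3 => .C | c1 => .B | c2 => .C

/-- Target vertex of an arrow. -/
def tgt : QArrow → QVertex
  | a1 => .A | a2 => .A | b1 => .B | b2 => .C | a3 => .B | c1 => .D | c2 => .D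

end QArrow

/-- A path of length `≥ 1`: a nonempty list of arrows, consecutively composable
(written left to right, so `a₁b₁` means `a₁` followed by `b₁`). -/
def IsPath (p : List QArrow) : Prop :=
  p ≠ [] ∧ p.Chain' (fun x y => x.tgt = y.src)

/-- The six forbidden two-step paths `a₁b₁, b₁c₁, c₁a₁, a₂b₂, b₂c₂, c₂a₂`
(the cyclic derivatives of the potential `W = a₁b₁c₁ + a₂b₂c₂`). -/
def badPairs : List (QArrow × QArrow) :=
  [(.a1, .b1), (.b1, .c1), (.c1, .a1), (.a2, .b2), (.b2, .c2), (.c2, .a2)]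

/-- `p` contains none of the six two-step paths as a consecutive subpath. -/
def Avoids (p : List QArrow) : Prop :=
  p.Chain' (fun x y => (x, y) ∉ badPairs)

/-- The length-seven path `c₂a₁b₂a₃c₁a₂b₁`. -/
def w7 : List QArrow := [.c2, .a1, .b2, .a3, .c1, .a2, .b1]

section InfixesOfNodupLists

variable {α : Type*} {w p : List α}

/-- Since `y` occurs only once in `w`, both infixes of `w` contain the same occurrence of it. -/
theorem cons_cons_isInfix_of_nodup {x y : α} (hw : w.Nodup) (hxy : [x, y] <:+: w)
    (hyp : y :: p <:+: w) : x :: y :: p <:+: w := by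
  obtain ⟨s, t, rfl⟩ := hxy
  obtain ⟨s', t', h⟩ := hyp
  have hsplit : (s ++ [x]) ++ y :: t = s' ++ y :: (p ++ t') := by simpa using h.symm
  have hy : y ∉ (s ++ [x]) ++ t :=
    (List.nodup_cons.1 (List.nodup_middle.1 (by simpa using hw))).1
  obtain ⟨-, -, rfl⟩ := (List.append_cons_inj_of_notMem
    (fun hmem => hy (List.mem_append_left _ hmem))
    (fun hmem => hy (List.mem_append_right _ hmem))).1 hsplit
  exact ⟨s, t', by simp⟩

theorem isInfix_of_isChain_of_nodup (hw : w.Nodup) (hp : p ⊆ w)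
    (hchain : p.IsChain fun x y => [x, y] <:+: w) : p <:+: w := by
  induction hchain with
  | nil => exact List.nil_infix
  | singleton x => exact (List.singleton_infix_iff x w).2 (hp List.mem_cons_self)
  | cons_cons hxy _ ih =>
    exact cons_cons_isInfix_of_nodup hw hxy (ih (List.subset_of_cons_subset hp))

theorem finite_setOf_isInfix (w : List α) : {p : List α | p <:+: w}.Finite :=
  w.sublists.finite_toSet.subset fun _ hp => List.mem_sublists.2 hp.sublist

end InfixesOfNodupLists

theorem nodup_w7 : w7.Nodup := by
  decide

theorem mem_w7 (x : QArrow) : x ∈ w7 := by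
  cases x <;> decide

theorem pair_isInfix_w7 {x y : QArrow} (hcomp : x.tgt = y.src) (hgood : (x, y) ∉ badPairs) :
    [x, y] <:+: w7 := by
  revert hcomp hgood
  cases x <;> cases y <;> decide

theorem isInfix_w7 {p : List QArrow} (hpath : IsPath p) (havoid : Avoids p) : p <:+: w7 := by
  have hchain : p.IsChain fun x y => [x, y] <:+: w7 :=
    List.isChain_iff_getElem.2 fun i hi =>
      pair_isInfix_w7 (hpath.2.getElem i hi) (havoid.getElem i hi)
  exact isInfix_of_isChain_of_nodup nodup_w7 (fun x _ => mem_w7 x) hchain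

/-- Every path of length at least `1` in `Q` avoiding the six two-step
paths `a₁b₁, b₁c₁, c₁a₁, a₂b₂, b₂c₂, c₂a₂` is a consecutive subpath (infix) of the
length-seven path `c₂a₁b₂a₃c₁a₂b₁`; in particular no such path has length `≥ 8`, and the
set of such paths is finite. -/
theorem avoiding_paths_are_infixes_of_w7 :
    (∀ p : List QArrow, IsPath p → Avoids p → p <:+: w7) ∧
    (∀ p : List QArrow, IsPath p → Avoids p → ¬ 8 ≤ p.length) ∧
    {p : List QArrow | IsPath p ∧ Avoids p}.Finite := by
  refine ⟨fun p => isInfix_w7, fun p hpath havoid => ?_, ?_⟩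
  · have hlen : p.length ≤ 7 := (isInfix_w7 hpath havoid).length_le
    omega
  · exact (finite_setOf_isInfix w7).subset fun p hp => isInfix_w7 hp.1 hp.2
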